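/- Let F : (ℤ → ℚ) → (ℤ → ℚ) be the cellular automaton global map induced by the local function f(u,v) = (1/2)·u·(u·v² − u·v − v² − 2·u + v + 4) (the rule of semigroup G₁₅). Suppose x : ℤ → ℚ satisfies x(i) ∈ {0,1,2} for all i ∈ ℤ. Then for every n ∈ ℕ and every i ∈ ℤ, [F^[n] x] i = x(i)·(2 − x(i)) + 2·∏_{j=0}^{n} (1/2)·x(i+j)·(x(i+j) − 1). -/

import Mathlib

/-!
For a state `u ∈ {0, 1, 2}`, put `d u = u (2 - u)` and `e u = u (u - 1) / 2`, the indicators of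
the states `1` and `2`. The rule is `f(u, v) = d u + 2 (e u) (e v)`: a cell in state `1` is frozen,
and a cell in state `2` survives exactly when its right neighbour is also in state `2`. As `d u` and
`e u` are orthogonal idempotents, an iterate of the form `d (x i) + 2 p i`, with `p i` an idempotent
orthogonal to `d (x i)`, is mapped to `d (x i) + 2 (p i) (p (i + 1))`. Starting from `p = e ∘ x`,
the idempotents `p i` become products of `e ∘ x` over windows growing by one cell per step.
-/

namespace RuleG15

section LocalRule

variable {R : Type*} [CommRing R]

/-- The polynomial `u (2 - u)`, which takes the values `0, 1, 0` at the states `0, 1, 2`. -/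
def oneIndicator (u : R) : R := u * (2 - u)

theorem oneIndicator_add_two_mul {a p : R} (ha : IsIdempotentElem a) (hp : IsIdempotentElem p)
    (hap : a * p = 0) : oneIndicator (a + 2 * p) = a := by
  unfold oneIndicator
  linear_combination -ha.eq - 4 * hp.eq - 4 * hap

theorem isIdempotentElem_oneIndicator {u : R} (hu : u * (u - 1) * (u - 2) = 0) :
    IsIdempotentElem (oneIndicator u) := by
  unfold IsIdempotentElem oneIndicator
  linear_combination (u - 1) * hu

variable [Invertible (2 : R)]

/-- The polynomial `u (u - 1) / 2`, which takes the values `0, 0, 1` at the states `0, 1, 2`. -/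
def twoIndicator (u : R) : R := ⅟2 * u * (u - 1)

/-- The local function of the semigroup `G₁₅`, over any commutative ring with `2` invertible. -/
def localRule (u v : R) : R :=
  ⅟2 * u * (u * v ^ 2 - u * v - v ^ 2 - 2 * u + v + 4)

theorem two_mul_twoIndicator (u : R) : 2 * twoIndicator u = u * (u - 1) := by
  rw [twoIndicator, mul_assoc, mul_invOf_cancel_left']

theorem oneIndicator_add_two_mul_twoIndicator (u : R) :
    oneIndicator u + 2 * twoIndicator u = u := by
  rw [two_mul_twoIndicator, oneIndicator]
  ring

theorem twoIndicator_add_two_mul {a p : R} (ha : IsIdempotentElem a) (hp : IsIdempotentElem p)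
    (hap : a * p = 0) : twoIndicator (a + 2 * p) = p := by
  refine (isUnit_of_invertible (2 : R)).mul_left_cancel ?_
  rw [two_mul_twoIndicator]
  linear_combination ha.eq + 4 * hp.eq + 4 * hap

theorem isIdempotentElem_twoIndicator {u : R} (hu : u * (u - 1) * (u - 2) = 0) :
    IsIdempotentElem (twoIndicator u) := by
  unfold IsIdempotentElem twoIndicator
  linear_combination (⅟2) ^ 2 * (u + 1) * hu + ⅟2 * u * (u - 1) * mul_invOf_self (2 : R)

theorem oneIndicator_mul_twoIndicator {u : R} (hu : u * (u - 1) * (u - 2) = 0) :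
    oneIndicator u * twoIndicator u = 0 := by
  unfold oneIndicator twoIndicator
  linear_combination -⅟2 * u * hu

theorem localRule_eq (u v : R) :
    localRule u v = oneIndicator u + 2 * (twoIndicator u * twoIndicator v) := by
  unfold localRule oneIndicator twoIndicator
  linear_combination
    (u * (2 - u) - ⅟2 * u * (u - 1) * v * (v - 1)) * mul_invOf_self (2 : R)

theorem localRule_add_two_mul {a b p q : R} (ha : IsIdempotentElem a) (hp : IsIdempotentElem p)
    (hap : a * p = 0) (hb : IsIdempotentElem b) (hq : IsIdempotentElem q) (hbq : b * q = 0) :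
    localRule (a + 2 * p) (b + 2 * q) = a + 2 * (p * q) := by
  rw [localRule_eq, oneIndicator_add_two_mul ha hp hap, twoIndicator_add_two_mul ha hp hap,
    twoIndicator_add_two_mul hb hq hbq]

end LocalRule

section Windows

variable {M : Type*} [CommMonoid M]

theorem isIdempotentElem_prod {ι : Type*} {s : Finset ι} {f : ι → M}
    (hf : ∀ i ∈ s, IsIdempotentElem (f i)) : IsIdempotentElem (∏ i ∈ s, f i) :=
  Finset.prod_induction f IsIdempotentElem (fun _ _ => IsIdempotentElem.mul) .one hf

theorem prod_range_succ_mul_prod_range_succ_shift {f : ℕ → M}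
    (hf : ∀ j, IsIdempotentElem (f j)) (n : ℕ) :
    (∏ j ∈ Finset.range (n + 1), f j) * ∏ j ∈ Finset.range (n + 1), f (j + 1) =
      ∏ j ∈ Finset.range (n + 2), f j := by
  have overlap : IsIdempotentElem (∏ j ∈ Finset.range n, f (j + 1)) :=
    isIdempotentElem_prod fun j _ => hf (j + 1)
  rw [Finset.prod_range_succ' f n, Finset.prod_range_succ' f (n + 1),
    Finset.prod_range_succ (fun j => f (j + 1)) n, mul_right_comm, ← mul_assoc, overlap.eq]

end Windows

/-- The global map of the cellular automaton with local function `f`, whose cells are indexed by an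
additive monoid with one (such as `ℤ`, `ℕ` or `ZMod N`); the right neighbour of `i` is `i + 1`. -/
def globalMap {G A : Type*} [Add G] [One G] (f : A → A → A) (x : G → A) (i : G) : A :=
  f (x i) (x (i + 1))

end RuleG15

open RuleG15

theorem stmt_15_general {G R : Type*} [AddMonoidWithOne G] [CommRing R] [Invertible (2 : R)]
    {x : G → R} (hx : ∀ i, x i * (x i - 1) * (x i - 2) = 0) (n : ℕ) (i : G) :
    (globalMap localRule)^[n] x i =
      oneIndicator (x i) + 2 * ∏ j ∈ Finset.range (n + 1), twoIndicator (x (i + j)) := by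
  have one_idem (i : G) := isIdempotentElem_oneIndicator (hx i)
  have two_idem (i : G) := isIdempotentElem_twoIndicator (hx i)
  induction n generalizing i with
  | zero => simp [oneIndicator_add_two_mul_twoIndicator]
  | succ n ih =>
    have window_idem (i : G) :
        IsIdempotentElem (∏ j ∈ Finset.range (n + 1), twoIndicator (x (i + j))) :=
      isIdempotentElem_prod fun j _ => two_idem (i + j)
    have orthogonal (i : G) :
        oneIndicator (x i) * ∏ j ∈ Finset.range (n + 1), twoIndicator (x (i + j)) = 0 := by
      rw [Finset.prod_range_succ', Nat.cast_zero, add_zero, mul_left_comm,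
        oneIndicator_mul_twoIndicator (hx i), mul_zero]
    have shift (j : ℕ) : i + 1 + (j : G) = i + (j + 1 : ℕ) := by
      rw [add_assoc, add_comm j 1, Nat.cast_add, Nat.cast_one]
    rw [Function.iterate_succ_apply', globalMap, ih, ih,
      localRule_add_two_mul (one_idem i) (window_idem i) (orthogonal i)
        (one_idem (i + 1)) (window_idem (i + 1)) (orthogonal (i + 1))]
    simp only [shift]
    rw [prod_range_succ_mul_prod_range_succ_shift (f := fun j : ℕ => twoIndicator (x (i + j)))
      fun j => two_idem (i + j)]

/-- Rule G₁₅. -/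
theorem stmt_15 (F : (ℤ → ℚ) → (ℤ → ℚ))
    (hF : ∀ x : ℤ → ℚ, ∀ i : ℤ,
      F x i = (1 / 2) * x i *
        (x i * x (i + 1) ^ 2 - x i * x (i + 1) - x (i + 1) ^ 2
          - 2 * x i + x (i + 1) + 4))
    (x : ℤ → ℚ) (hx : ∀ i : ℤ, x i ∈ ({0, 1, 2} : Set ℚ)) :
    ∀ (n : ℕ) (i : ℤ),
      F^[n] x i = x i * (2 - x i)
        + 2 * ∏ j ∈ Finset.range (n + 1), (1 / 2) * x (i + j) * (x (i + j) - 1) := by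
  have isState (i : ℤ) : x i * (x i - 1) * (x i - 2) = 0 := by
    rcases hx i with h | h | h <;> rw [h] <;> norm_num
  obtain rfl : F = globalMap localRule := by
    funext x i
    simp only [hF, globalMap, localRule, invOf_eq_inv, one_div]
  simpa only [oneIndicator, twoIndicator, invOf_eq_inv, one_div] using stmt_15_general isState
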